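/- arXiv:2006.03821 — 4 statements merged into one kernel-verified Lean document; each statement's English description precedes it below -/
import Mathlib

section
/- Let N ≥ 1, let A_0 and Ω_0 be domains in ℂ^N, and let {A_i} and {Ω_i} be sequences of domains in ℂ^N with lim A_i = A_0 and lim Ω_i = Ω_0. For each i let f_i be holomorphic and injective on A_i with f_i(A_i) = Ω_i, and let g_i be holomorphic on Ω_i with g_i ∘ f_i = id on A_i and f_i ∘ g_i = id on Ω_i. Assume the sequence {f_i} converges locally uniformly on A_0 to a map F and {g_i} converges locally uniformly on Ω_0 to a map G. Then either (i) {f_i} is compactly divergent, i.e. for every compact K ⊆ A_0 and every compact L ⊆ Ω_0 there is i_0 such that f_i(K) ∩ L = ∅ for all i ≥ i_0; or (ii) there is a subsequence {f_{i_j}} converging locally uniformly on A_0 to a map which is a holomorphic bijection from A_0 onto Ω_0 with holomorphic inverse. -/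
open Filter Topology Set

/-- Convergence of a sequence of domains: every compact subset of the limit is eventually
contained in the terms, and every compact set eventually contained in the terms lies in
the limit. -/
def DomainSeqConv {E : Type*} [TopologicalSpace E] (Ωs : ℕ → Set E) (Ω0 : Set E) : Prop :=
  (∀ K : Set E, K ⊆ Ω0 → IsCompact K → ∃ i0 : ℕ, ∀ i ≥ i0, K ⊆ Ωs i) ∧
  (∀ K : Set E, IsCompact K → (∃ i0 : ℕ, ∀ i ≥ i0, K ⊆ Ωs i) → K ⊆ Ω0)

section SeveralComplexVariables

open Metric

variable {E F : Type*} [NormedAddCommGroup E] [NormedSpace ℂ E]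
  [NormedAddCommGroup F] [NormedSpace ℂ F]

/-- Cauchy estimate for the Fréchet derivative. -/
theorem norm_fderiv_le_of_norm_le_on_ball {f : E → F} {c : E} {R M : ℝ} (hR : 0 < R)
    (hd : DifferentiableOn ℂ f (ball c R)) (hM : ∀ z ∈ ball c R, ‖f z‖ ≤ M) :
    ‖fderiv ℂ f c‖ ≤ 2 * M / R := by
  refine Complex.norm_fderiv_le_div_of_mapsTo_ball hd (fun z hz => ?_) hR
  rw [mem_closedBall, dist_eq_norm]
  linarith [norm_sub_le (f z) (f c), hM z hz, hM c (mem_ball_self hR)]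

/-- Quantitative first-order Taylor expansion of a bounded holomorphic map. -/
theorem norm_sub_sub_fderiv_le_of_norm_le_on_ball {f : E → F} {c h : E} {R M : ℝ}
    (hd : DifferentiableOn ℂ f (ball c R)) (hM : ∀ z ∈ ball c R, ‖f z‖ ≤ M) (hh : ‖h‖ < R) :
    ‖f (c + h) - f c - fderiv ℂ f c h‖ ≤ 4 * M * (‖h‖ / R) ^ 2 := by
  have hR : 0 < R := (norm_nonneg h).trans_lt hh
  have hM0 : 0 ≤ M := (norm_nonneg _).trans (hM c (mem_ball_self hR))
  have hdc : DifferentiableAt ℂ f c := hd.differentiableAt (ball_mem_nhds c hR)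
  have hz : c + h ∈ ball c R := by simpa [mem_ball, dist_eq_norm] using hh
  have key := Complex.dist_le_mul_div_pow_of_mapsTo_ball_of_isLittleO (R₂ := 4 * M) (n := 1)
    (f := fun z => f z - fderiv ℂ f c (z - c)) (c := c) (z := c + h) (R₁ := R)
    (hd.sub (by fun_prop)) (fun z hz => ?_) ?_ hz
  · rw [dist_eq_norm, dist_eq_norm] at key
    simp only [add_sub_cancel_left, sub_self, map_zero, sub_zero] at key
    rwa [sub_right_comm] at key
  · rw [mem_closedBall, dist_eq_norm]
    have h1 : ‖fderiv ℂ f c (z - c)‖ ≤ 2 * M := by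
      calc ‖fderiv ℂ f c (z - c)‖ ≤ ‖fderiv ℂ f c‖ * ‖z - c‖ := ContinuousLinearMap.le_opNorm _ _
        _ ≤ (2 * M / R) * R := by
          gcongr
          · exact norm_fderiv_le_of_norm_le_on_ball hR hd hM
          · rw [← dist_eq_norm]; exact (mem_ball.1 hz).le
        _ = 2 * M := by field_simp
    simp only [sub_self, map_zero, sub_zero]
    linarith [norm_sub_le (f z - fderiv ℂ f c (z - c)) (f c), norm_sub_le (f z)
      (fderiv ℂ f c (z - c)), hM z hz, hM c (mem_ball_self hR)]
  · have := hdc.hasFDerivAt.isLittleO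
    simp only [sub_self, map_zero, sub_zero, pow_one]
    refine (this.norm_right).congr_left fun z => ?_
    abel

/-- Weierstrass' theorem: a uniform limit of holomorphic maps on a ball is holomorphic on the
half-size ball, where the derivatives converge uniformly. -/
theorem differentiableOn_and_tendstoUniformlyOn_fderiv_of_tendstoUniformlyOn_ball
    [CompleteSpace F] {f : ℕ → E → F} {g : E → F} {c : E} {R : ℝ}
    (hd : ∀ᶠ n in atTop, DifferentiableOn ℂ (f n) (ball c R))
    (hu : TendstoUniformlyOn f g atTop (ball c R)) :
    DifferentiableOn ℂ g (ball c (R / 2)) ∧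
      TendstoUniformlyOn (fun n => fderiv ℂ (f n)) (fderiv ℂ g) atTop (ball c (R / 2)) := by
  have hsub : ∀ z ∈ ball c (R / 2), ball z (R / 2) ⊆ ball c R := fun z hz =>
    ball_subset_ball' (by linarith [mem_ball.1 hz])
  have hat : ∀ n, DifferentiableOn ℂ (f n) (ball c R) → ∀ z ∈ ball c (R / 2),
      DifferentiableAt ℂ (f n) z := fun n hn z hz => by
    have hR : 0 < R / 2 := dist_nonneg.trans_lt (mem_ball.1 hz)
    exact hn.differentiableAt (isOpen_ball.mem_nhds (hsub z hz (mem_ball_self hR)))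
  obtain ⟨n₀, hn₀⟩ := eventually_atTop.1 hd
  have hc : UniformCauchySeqOn (fun n => fderiv ℂ (f n)) atTop (ball c (R / 2)) := by
    rw [Metric.uniformCauchySeqOn_iff]
    intro ε hε
    rcases le_or_gt R 0 with hR | hR
    · exact ⟨0, fun m _ n _ x hx => absurd (dist_nonneg.trans_lt (mem_ball.1 hx)) (by linarith)⟩
    obtain ⟨n₁, hn₁⟩ := Metric.uniformCauchySeqOn_iff.1 hu.uniformCauchySeqOn (ε * R / 8)
      (by positivity)
    refine ⟨max n₀ n₁, fun m hm n hn z hz => ?_⟩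
    have hdm := hn₀ m (le_trans (le_max_left _ _) hm)
    have hdn := hn₀ n (le_trans (le_max_left _ _) hn)
    have := norm_fderiv_le_of_norm_le_on_ball (f := fun z => f m z - f n z) (M := ε * R / 8)
      (half_pos hR) ((hdm.sub hdn).mono (hsub z hz)) (fun w hw => by
        rw [← dist_eq_norm]
        exact (hn₁ m (le_trans (le_max_right _ _) hm) n (le_trans (le_max_right _ _) hn) w
          (hsub z hz hw)).le)
    rw [fderiv_fun_sub (hat m hdm z hz) (hat n hdn z hz), ← dist_eq_norm] at this
    refine this.trans_lt ?_
    have : 2 * (ε * R / 8) / (R / 2) = ε / 2 := by field_simp; norm_num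
    linarith
  have hlim : ∀ z ∈ ball c (R / 2), ∃ L, Tendsto (fun n => fderiv ℂ (f n) z) atTop (𝓝 L) :=
    fun z hz => cauchySeq_tendsto_of_complete (hc.cauchySeq hz)
  choose! g' hg' using hlim
  have hu' := hc.tendstoUniformlyOn_of_tendsto hg'
  have hder : ∀ z ∈ ball c (R / 2), HasFDerivAt g (g' z) z := by
    intro z hz
    have hzn := isOpen_ball.mem_nhds hz
    refine hasFDerivAt_of_tendstoUniformlyOnFilter (l := atTop) (f := f)
      (f' := fun n => fderiv ℂ (f n)) ?_ ?_ ?_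
    · exact (tendstoUniformlyOn_iff_tendstoUniformlyOnFilter.1 hu').mono_right
        (le_principal_iff.2 hzn)
    · filter_upwards [hd.prod_mk hzn] with p hp
      exact (hat p.1 hp.1 p.2 hp.2).hasFDerivAt
    · filter_upwards [hzn] with w hw
      have hR : 0 < R / 2 := dist_nonneg.trans_lt (mem_ball.1 hw)
      exact hu.tendsto_at (hsub w hw (mem_ball_self hR))
  exact ⟨fun z hz => (hder z hz).differentiableAt.differentiableWithinAt,
    hu'.congr_right fun z hz => (hder z hz).fderiv.symm⟩

/-- Differentiability of a family of operators on a finite-dimensional space can be checked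
pointwise. -/
theorem differentiableAt_of_forall_clm_apply {D : Type*} [NormedAddCommGroup D] [NormedSpace ℂ D]
    [FiniteDimensional ℂ E] {f : D → E →L[ℂ] F} {x : D}
    (h : ∀ y, DifferentiableAt ℂ (fun z => f z y) x) : DifferentiableAt ℂ f x := by
  let e₁ := ContinuousLinearEquiv.ofFinrankEq
    (Module.finrank_fin_fun ℂ (n := Module.finrank ℂ E)).symm
  let e₂ := (e₁.arrowCongr (1 : F ≃L[ℂ] F)).trans (ContinuousLinearEquiv.piRing _)
  rw [← Function.id_comp f, ← e₂.symm_comp_self]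
  exact e₂.symm.differentiableAt.comp x (differentiableAt_pi.2 fun i => h _)

/-- The derivative of a holomorphic map on a finite-dimensional space is holomorphic. -/
theorem DifferentiableOn.fderiv_of_isOpen [FiniteDimensional ℂ E] [CompleteSpace F]
    {f : E → F} {U : Set E} (hf : DifferentiableOn ℂ f U) (hU : IsOpen U) :
    DifferentiableOn ℂ (fderiv ℂ f) U := by
  intro c hc
  refine DifferentiableAt.differentiableWithinAt ?_
  have hcont : ContinuousAt f c := (hf.differentiableAt (hU.mem_nhds hc)).continuousAt
  have hbd : ∀ᶠ z in 𝓝 c, ‖f z‖ ≤ ‖f c‖ + 1 := by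
    filter_upwards [hcont.norm.eventually (gt_mem_nhds (lt_add_one ‖f c‖))] with z hz using hz.le
  obtain ⟨R, hR, hball⟩ := Metric.mem_nhds_iff.1 (inter_mem (hU.mem_nhds hc) hbd)
  set M := ‖f c‖ + 1
  have hM0 : 0 ≤ M := by positivity
  suffices h : ∀ e : E, DifferentiableAt ℂ (fun z => fderiv ℂ f z e) c from
    differentiableAt_of_forall_clm_apply h
  intro e
  have hsub : ∀ z ∈ ball c (R / 2), ball z (R / 2) ⊆ ball c R := fun z hz =>
    ball_subset_ball' (by linarith [mem_ball.1 hz])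
  have hdball : DifferentiableOn ℂ f (ball c R) := hf.mono fun z hz => (hball hz).1
  have hs : Tendsto (fun n : ℕ => (1 : ℝ) / ((n : ℝ) + 1)) atTop (𝓝 0) :=
    tendsto_one_div_add_atTop_nhds_zero_nat
  have hsmall : ∀ᶠ n : ℕ in atTop, (1 : ℝ) / ((n : ℝ) + 1) * ‖e‖ < R / 2 := by
    have := hs.mul_const ‖e‖
    rw [zero_mul] at this
    exact this.eventually (gt_mem_nhds (half_pos hR))
  have hnorm : ∀ n : ℕ, ‖((n : ℂ) + 1)⁻¹ • e‖ = 1 / ((n : ℝ) + 1) * ‖e‖ := fun n => by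
    rw [norm_smul, norm_inv, one_div]
    congr 2
    exact_mod_cast Complex.norm_natCast (n + 1)
  have key := differentiableOn_and_tendstoUniformlyOn_fderiv_of_tendstoUniformlyOn_ball
    (f := fun (n : ℕ) z => ((n : ℂ) + 1) • (f (z + ((n : ℂ) + 1)⁻¹ • e) - f z))
    (g := fun z => fderiv ℂ f z e) (c := c) (R := R / 2) ?_ ?_
  · exact key.1.differentiableAt (ball_mem_nhds c (by positivity))
  · filter_upwards [hsmall] with n hn
    refine DifferentiableOn.const_smul (DifferentiableOn.sub ?_ ?_) _
    · refine hdball.comp (by fun_prop) fun z hz => hsub z hz ?_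
      rw [mem_ball, dist_eq_norm, add_sub_cancel_left, hnorm]
      exact hn
    · exact hdball.mono (ball_subset_ball (by linarith))
  · rw [Metric.tendstoUniformlyOn_iff]
    intro ε hε
    have hlim : Tendsto (fun n : ℕ => 4 * M * (‖e‖ / (R / 2)) ^ 2 * (1 / ((n : ℝ) + 1)))
        atTop (𝓝 0) := by simpa using hs.const_mul (4 * M * (‖e‖ / (R / 2)) ^ 2)
    filter_upwards [hsmall, hlim.eventually (gt_mem_nhds hε)] with n hn hn' z hz
    have hT := norm_sub_sub_fderiv_le_of_norm_le_on_ball (f := f) (c := z)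
      (h := ((n : ℂ) + 1)⁻¹ • e) (hdball.mono (hsub z hz))
      (fun w hw => (hball (hsub z hz hw)).2) (by rw [hnorm]; exact hn)
    have hn0 : (n : ℂ) + 1 ≠ 0 := Nat.cast_add_one_ne_zero n
    have hnn : ‖(n : ℂ) + 1‖ = (n : ℝ) + 1 := by exact_mod_cast Complex.norm_natCast (n + 1)
    have hpos : (0 : ℝ) < (n : ℝ) + 1 := by positivity
    rw [hnorm] at hT
    refine lt_of_le_of_lt ?_ hn'
    rw [dist_comm, dist_eq_norm]
    calc ‖((n : ℂ) + 1) • (f (z + ((n : ℂ) + 1)⁻¹ • e) - f z) - fderiv ℂ f z e‖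
        = ‖((n : ℂ) + 1) • (f (z + ((n : ℂ) + 1)⁻¹ • e) - f z
            - fderiv ℂ f z (((n : ℂ) + 1)⁻¹ • e))‖ := by
          rw [map_smul, smul_sub _ _ ((_ : ℂ) • _), smul_inv_smul₀ hn0]
      _ ≤ ((n : ℝ) + 1) * (4 * M * (1 / ((n : ℝ) + 1) * ‖e‖ / (R / 2)) ^ 2) := by
          rw [norm_smul, hnn]; gcongr
      _ = 4 * M * (‖e‖ / (R / 2)) ^ 2 * (1 / ((n : ℝ) + 1)) := by field_simp

/-- Uniform convergence near `x` to a map continuous at `x` gives joint convergence at `x`. -/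
theorem TendstoUniformlyOn.tendsto_prod_nhds {X Y : Type*} [TopologicalSpace X] [UniformSpace Y]
    {f : ℕ → X → Y} {g : X → Y} {s : Set X} {x : X} (h : TendstoUniformlyOn f g atTop s)
    (hs : s ∈ 𝓝 x) (hg : ContinuousAt g x) :
    Tendsto (fun p : ℕ × X => f p.1 p.2) (atTop ×ˢ 𝓝 x) (𝓝 (g x)) :=
  tendsto_comp_of_locally_uniform_limit (F := fun (p : ℕ × X) y => f p.1 y) (g := Prod.snd) hg
    tendsto_snd fun u hu => ⟨s, hs, (h u hu).prod_inl _⟩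

/-- Hurwitz' theorem: a limit of zero-free holomorphic functions on a planar domain which is not
identically zero has no zeros. -/
theorem Complex.ne_zero_of_tendsto_of_forall_ne_zero {h : ℕ → ℂ → ℂ} {H : ℂ → ℂ} {U : Set ℂ}
    (hU : IsOpen U) (hUc : IsPreconnected U)
    (hd : ∀ᶠ n in atTop, DifferentiableOn ℂ (h n) U) (hne : ∀ᶠ n in atTop, ∀ t ∈ U, h n t ≠ 0)
    (hH : DifferentiableOn ℂ H U)
    (hlim : ∀ t ∈ U, Tendsto (fun p : ℕ × ℂ => h p.1 p.2) (atTop ×ˢ 𝓝 t) (𝓝 (H t)))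
    {a b : ℂ} (ha : a ∈ U) (hb : b ∈ U) (hHb : H b ≠ 0) : H a ≠ 0 := by
  intro hHa
  have han : AnalyticOnNhd ℂ H U := hH.analyticOnNhd hU
  rcases (han a ha).eventually_eq_zero_or_eventually_ne_zero with h0 | h0
  · exact hHb (han.eqOn_zero_of_preconnected_of_eventuallyEq_zero hUc ha h0 hb)
  rw [eventually_nhdsWithin_iff] at h0
  obtain ⟨r, hr, hball⟩ := Metric.nhds_basis_closedBall.mem_iff.1
    (inter_mem (hU.mem_nhds ha) h0)
  have hsU : sphere a r ⊆ U := fun t ht => (hball (sphere_subset_closedBall ht)).1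
  have hsne : ∀ t ∈ sphere a r, H t ≠ 0 := fun t ht =>
    (hball (sphere_subset_closedBall ht)).2 (ne_of_mem_sphere ht hr.ne')
  have hsc : IsCompact (sphere a r) := isCompact_sphere a r
  obtain ⟨t₀, ht₀, hmin⟩ := hsc.exists_isMinOn (NormedSpace.sphere_nonempty.2 hr.le)
    (hH.continuousOn.mono hsU).norm
  set δ := ‖H t₀‖ / 2 with hδ
  have hHt₀ : 0 < ‖H t₀‖ := norm_pos_iff.2 (hsne t₀ ht₀)
  have hlow : ∀ᶠ n in atTop, ∀ t ∈ sphere a r, δ < ‖h n t‖ := by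
    have : {p : ℕ × ℂ | δ < ‖h p.1 p.2‖} ∈ (atTop : Filter ℕ) ×ˢ 𝓝ˢ (sphere a r) := by
      refine hsc.mem_prod_nhdsSet_of_forall fun t ht => ?_
      refine (hlim t (hsU ht)).norm.eventually (lt_mem_nhds ?_)
      have : ‖H t₀‖ ≤ ‖H t‖ := hmin ht
      linarith
    have this' : ∀ᶠ p : ℕ × ℂ in (atTop : Filter ℕ) ×ˢ 𝓝ˢ (sphere a r), δ < ‖h p.1 p.2‖ := this
    exact this'.curry.mono fun n hn t ht => hn.self_of_nhdsSet t ht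
  have hpt : Tendsto (fun n => h n a) atTop (𝓝 0) := by
    rw [← hHa]
    exact (hlim a ha).comp (tendsto_id.prodMk tendsto_const_nhds)
  have hsmall : ∀ᶠ n in atTop, ‖h n a‖ < δ := by
    have := hpt.norm
    rw [norm_zero] at this
    exact this.eventually (gt_mem_nhds (by positivity))
  obtain ⟨n, hn1, hn2, hn3, hn4⟩ := (hd.and (hne.and (hlow.and hsmall))).exists
  have hcl : closure (ball a r) ⊆ U := closure_ball_subset_closedBall.trans
    fun t ht => (hball ht).1
  have hmax := norm_le_of_forall_mem_frontier_norm_le (f := fun t => (h n t)⁻¹)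
    (isBounded_ball (x := a) (r := r))
    (DifferentiableOn.diffContOnCl ((hn1.mono hcl).inv fun t ht => hn2 t (hcl ht)))
    (C := δ⁻¹) (fun t ht => by
      rw [frontier_ball a hr.ne'] at ht
      rw [norm_inv]
      exact inv_anti₀ (by positivity) (hn3 t ht).le) (subset_closure (mem_ball_self hr))
  rw [norm_inv] at hmax
  exact absurd ((inv_le_inv₀ (norm_pos_iff.2 (hn2 a ha)) (by positivity)).1 hmax) (not_le.2 hn4)

/-- If `g ∘ f` is the identity near `x`, then the derivative of `f` at `x` is injective, so its
determinant does not vanish. -/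
theorem det_fderiv_ne_zero_of_leftInverse {f g : E → E} {x : E}
    (hf : DifferentiableAt ℂ f x) (hg : DifferentiableAt ℂ g (f x))
    (hgf : ∀ᶠ y in 𝓝 x, g (f y) = y) : (fderiv ℂ f x).det ≠ 0 := by
  have h1 : (fderiv ℂ g (f x)).comp (fderiv ℂ f x) = ContinuousLinearMap.id ℂ E := by
    rw [← fderiv_comp x hg hf, ← fderiv_id (x := x)]
    exact Filter.EventuallyEq.fderiv_eq hgf
  have h2 : (fderiv ℂ g (f x)).det * (fderiv ℂ f x).det = 1 := by
    have := congrArg ContinuousLinearMap.det h1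
    simpa [ContinuousLinearMap.det, ContinuousLinearMap.toLinearMap_comp, LinearMap.det_comp]
      using this
  exact right_ne_zero_of_mul_eq_one h2

variable [FiniteDimensional ℂ E]

theorem ContinuousLinearMap.differentiable_det :
    Differentiable ℂ (fun T : E →L[ℂ] E => T.det) := by
  classical
  let b := Module.finBasis ℂ E
  have h : (fun T : E →L[ℂ] E => T.det) = fun T : E →L[ℂ] E =>
      ∑ σ : Equiv.Perm (Fin (Module.finrank ℂ E)),
        (Equiv.Perm.sign σ : ℂ) * ∏ i, b.repr (T (b i)) (σ i) := by
    ext T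
    rw [ContinuousLinearMap.det, ← LinearMap.det_toMatrix b, Matrix.det_apply']
    simp [LinearMap.toMatrix_apply]
  have hentry : ∀ i j, Differentiable ℂ (fun T : E →L[ℂ] E => b.repr (T (b i)) j) := fun i j =>
    (LinearMap.toContinuousLinearMap (b.coord j)).differentiable.comp
      ((ContinuousLinearMap.apply ℂ E (b i)).differentiable)
  rw [h]
  fun_prop

/-- Perturbed inverse function theorem: if `f n → F` together with the derivatives, jointly at `x`,
and the derivative of `F` at `x` is invertible, then the images `f n '' V` of a neighbourhood `V`
of `x` eventually contain a fixed ball around `F x`. -/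
theorem exists_closedBall_subset_image_of_tendsto [Nontrivial E] {f : ℕ → E → E} {F : E → E}
    {x : E} {V : Set E} (hV : V ∈ 𝓝 x) (hd : ∀ᶠ n in atTop, ∀ y ∈ V, DifferentiableAt ℂ (f n) y)
    (hlim : Tendsto (fun p : ℕ × E => f p.1 p.2) (atTop ×ˢ 𝓝 x) (𝓝 (F x)))
    (hlim' : Tendsto (fun p : ℕ × E => fderiv ℂ (f p.1) p.2) (atTop ×ˢ 𝓝 x)
      (𝓝 (fderiv ℂ F x))) (hdet : (fderiv ℂ F x).det ≠ 0) :
    ∃ ρ > 0, ∀ᶠ n in atTop, closedBall (F x) ρ ⊆ f n '' V := by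
  have : CompleteSpace E := FiniteDimensional.complete ℂ E
  let L := (fderiv ℂ F x).toContinuousLinearEquivOfDetNeZero hdet
  have hL : (L : E →L[ℂ] E) = fderiv ℂ F x := by ext; rfl
  have hLpos : 0 < ‖(L.symm : E →L[ℂ] E)‖₊ := L.nnnorm_symm_pos
  set c : NNReal := ‖(L.symm : E →L[ℂ] E)‖₊⁻¹ / 2 with hc
  have hcpos : 0 < c := by positivity
  have hclose : ∀ᶠ p : ℕ × E in atTop ×ˢ 𝓝 x, ‖fderiv ℂ (f p.1) p.2 - L‖ ≤ c := by
    have := hlim'.eventually (Metric.closedBall_mem_nhds _ (NNReal.coe_pos.2 hcpos))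
    simpa only [mem_closedBall, dist_eq_norm, hL] using this
  obtain ⟨P, hP, Q, hQ, hPQ⟩ := eventually_prod_iff.1 hclose
  obtain ⟨ε, hε, hball⟩ := Metric.nhds_basis_closedBall.mem_iff.1 (inter_mem hV hQ)
  have hpt : Tendsto (fun n => f n x) atTop (𝓝 (F x)) :=
    hlim.comp (tendsto_id.prodMk tendsto_const_nhds)
  have hρ : 0 < (c : ℝ) * ε / 2 := by positivity
  refine ⟨(c : ℝ) * ε / 2, hρ, ?_⟩
  filter_upwards [hP, hd, hpt.eventually (Metric.ball_mem_nhds _ hρ)] with n hPn hdn hn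
  have happ : ApproximatesLinearOn (f n) (L : E →L[ℂ] E) (closedBall x ε) c := fun y hy z hz =>
    (convex_closedBall x ε).norm_image_sub_le_of_norm_fderiv_le'
      (fun w hw => hdn w (hball hw).1) (fun w hw => hPQ hPn (hball hw).2) hz hy
  have hsurj := happ.surjOn_closedBall_of_nonlinearRightInverse L.toNonlinearRightInverse hε.le
    subset_rfl
  have hrad : ((L.toNonlinearRightInverse.nnnorm : ℝ)⁻¹ - c) = c := by
    change ((‖(L.symm : E →L[ℂ] E)‖₊ : ℝ)⁻¹ - c) = c
    rw [hc]; push_cast; ring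
  rw [hrad] at hsurj
  intro y hy
  obtain ⟨z, hz, rfl⟩ := hsurj (show y ∈ closedBall (f n x) (c * ε) by
    rw [mem_closedBall] at hy ⊢
    rw [dist_comm] at hn
    linarith [dist_triangle y (F x) (f n x)])
  exact ⟨z, (hball hz).1, rfl⟩

/-- Locally uniform limits, along exhausting domains, of holomorphic maps: the limit is holomorphic
and the maps and their derivatives converge jointly. -/
theorem differentiableAt_and_tendsto_prod_of_tendstoUniformlyOn_isCompact [CompleteSpace F]
    {f : ℕ → E → F} {g : E → F} {A : ℕ → Set E} {U : Set E} (hU : IsOpen U)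
    (hA : ∀ K ⊆ U, IsCompact K → ∀ᶠ n in atTop, K ⊆ A n)
    (hd : ∀ n, DifferentiableOn ℂ (f n) (A n))
    (hf : ∀ K ⊆ U, IsCompact K → TendstoUniformlyOn f g atTop K) {x : E} (hx : x ∈ U) :
    DifferentiableAt ℂ g x ∧
      Tendsto (fun p : ℕ × E => f p.1 p.2) (atTop ×ˢ 𝓝 x) (𝓝 (g x)) ∧
      Tendsto (fun p : ℕ × E => fderiv ℂ (f p.1) p.2) (atTop ×ˢ 𝓝 x) (𝓝 (fderiv ℂ g x)) := by
  have : ProperSpace E := FiniteDimensional.proper ℂ E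
  obtain ⟨R, hR, hball⟩ := Metric.nhds_basis_closedBall.mem_iff.1 (hU.mem_nhds hx)
  have hK := isCompact_closedBall x R
  have hu := (hf _ hball hK).mono ball_subset_closedBall
  have key := differentiableOn_and_tendstoUniformlyOn_fderiv_of_tendstoUniformlyOn_ball (c := x)
    ((hA _ hball hK).mono fun n hn => (hd n).mono (ball_subset_closedBall.trans hn)) hu
  have hnhds : ball x (R / 2) ∈ 𝓝 x := ball_mem_nhds x (half_pos hR)
  have hdx := key.1.differentiableAt hnhds
  exact ⟨hdx, hu.tendsto_prod_nhds (ball_mem_nhds x hR) hdx.continuousAt,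
    key.2.tendsto_prod_nhds hnhds
      ((key.1.fderiv_of_isOpen isOpen_ball).differentiableAt hnhds).continuousAt⟩

theorem DomainSeqConv.eventually_subset {X : Type*} [TopologicalSpace X] {A : ℕ → Set X}
    {A0 : Set X} (h : DomainSeqConv A A0) : ∀ K ⊆ A0, IsCompact K → ∀ᶠ n in atTop, K ⊆ A n :=
  fun K hK hKc => eventually_atTop.2 (h.1 K hK hKc)

variable {A Ωs : ℕ → Set E} {A0 Ω0 : Set E} {f g : ℕ → E → E} {F G : E → E}

/-- Where the limit `F` of the maps `f n` takes values in `Ω0`, the limit `G` of their inverses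
inverts it. -/
theorem limit_leftInverse (hA0 : IsOpen A0) (hΩ0 : IsOpen Ω0)
    (hlimA : DomainSeqConv A A0) (hlimΩ : DomainSeqConv Ωs Ω0)
    (hf : ∀ i, DifferentiableOn ℂ (f i) (A i)) (hg : ∀ i, DifferentiableOn ℂ (g i) (Ωs i))
    (hgf : ∀ i, ∀ z ∈ A i, g i (f i z) = z)
    (hF : ∀ K ⊆ A0, IsCompact K → TendstoUniformlyOn f F atTop K)
    (hG : ∀ K ⊆ Ω0, IsCompact K → TendstoUniformlyOn g G atTop K)
    {x : E} (hx : x ∈ A0) (hFx : F x ∈ Ω0) : G (F x) = x := by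
  have : CompleteSpace E := FiniteDimensional.complete ℂ E
  have h1 := (differentiableAt_and_tendsto_prod_of_tendstoUniformlyOn_isCompact hΩ0
    hlimΩ.eventually_subset hg hG hFx).2.1
  have h2 : Tendsto (fun n => f n x) atTop (𝓝 (F x)) :=
    (differentiableAt_and_tendsto_prod_of_tendstoUniformlyOn_isCompact hA0
      hlimA.eventually_subset hf hF hx).2.1.comp (tendsto_id.prodMk tendsto_const_nhds)
  have h3 : Tendsto (fun n => g n (f n x)) atTop (𝓝 (G (F x))) := h1.comp (tendsto_id.prodMk h2)
  refine tendsto_nhds_unique h3 (tendsto_const_nhds.congr' ?_)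
  filter_upwards [hlimA.eventually_subset {x} (singleton_subset_iff.2 hx) isCompact_singleton]
    with n hn using (hgf n x (hn rfl)).symm

/-- If the limit `F` of biholomorphic maps `f n : A n → Ωs n`, whose inverses also converge, takes
one value in `Ω0`, then it maps all of `A0` into `Ω0`. -/
theorem limit_mapsTo [Nontrivial E] (hA : ∀ i, IsOpen (A i)) (hΩ : ∀ i, IsOpen (Ωs i))
    (hA0 : IsOpen A0) (hA0c : IsPreconnected A0) (hΩ0 : IsOpen Ω0)
    (hlimA : DomainSeqConv A A0) (hlimΩ : DomainSeqConv Ωs Ω0)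
    (hf : ∀ i, DifferentiableOn ℂ (f i) (A i)) (hfm : ∀ i, MapsTo (f i) (A i) (Ωs i))
    (hg : ∀ i, DifferentiableOn ℂ (g i) (Ωs i)) (hgf : ∀ i, ∀ z ∈ A i, g i (f i z) = z)
    (hF : ∀ K ⊆ A0, IsCompact K → TendstoUniformlyOn f F atTop K)
    (hG : ∀ K ⊆ Ω0, IsCompact K → TendstoUniformlyOn g G atTop K)
    {z : E} (hz : z ∈ A0) (hFz : F z ∈ Ω0) : MapsTo F A0 Ω0 := by
  have : CompleteSpace E := FiniteDimensional.complete ℂ E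
  have : ProperSpace E := FiniteDimensional.proper ℂ E
  have hFlim := fun {x : E} (hx : x ∈ A0) =>
    differentiableAt_and_tendsto_prod_of_tendstoUniformlyOn_isCompact hA0
      hlimA.eventually_subset hf hF hx
  have hFd : DifferentiableOn ℂ F A0 := fun x hx => (hFlim hx).1.differentiableWithinAt
  have hpre : ∀ {x}, x ∈ A0 → F x ∈ Ω0 → ∀ᶠ y in 𝓝 x, y ∈ A0 ∧ F y ∈ Ω0 := fun hx hFx =>
    inter_mem (hA0.mem_nhds hx) ((hFlim hx).1.continuousAt.preimage_mem_nhds (hΩ0.mem_nhds hFx))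
  have hdetF : ∀ {x}, x ∈ A0 → F x ∈ Ω0 → (fderiv ℂ F x).det ≠ 0 := fun hx hFx =>
    det_fderiv_ne_zero_of_leftInverse (hFlim hx).1
      (differentiableAt_and_tendsto_prod_of_tendstoUniformlyOn_isCompact hΩ0
        hlimΩ.eventually_subset hg hG hFx).1
      ((hpre hx hFx).mono fun y hy =>
        limit_leftInverse hA0 hΩ0 hlimA hlimΩ hf hg hgf hF hG hy.1 hy.2)
  have hdetf : ∀ i, ∀ x ∈ A i, (fderiv ℂ (f i) x).det ≠ 0 := fun i x hx =>
    det_fderiv_ne_zero_of_leftInverse ((hf i).differentiableAt ((hA i).mem_nhds hx))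
      ((hg i).differentiableAt ((hΩ i).mem_nhds (hfm i hx)))
      (mem_of_superset ((hA i).mem_nhds hx) fun y hy => hgf i y hy)
  have hsub : A0 ⊆ {x | x ∈ A0 ∧ F x ∈ Ω0} := by
    refine hA0c.subset_of_closure_inter_subset (isOpen_iff_mem_nhds.2 fun x hx => hpre hx.1 hx.2)
      ⟨z, hz, hz, hFz⟩ ?_
    rintro x ⟨hxcl, hx⟩
    refine ⟨hx, ?_⟩
    obtain ⟨R, hR, hball⟩ := Metric.nhds_basis_closedBall.mem_iff.1 (hA0.mem_nhds hx)
    obtain ⟨y, ⟨hyA, hFy⟩, hyx⟩ := Metric.mem_closure_iff.1 hxcl (R / 2) (half_pos hR)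
    have hAn := hlimA.eventually_subset _ hball (isCompact_closedBall x R)
    let ℓ : ℂ → E := fun t => x + t • (y - x)
    have hℓ : Differentiable ℂ ℓ := by fun_prop
    have hℓmem : ∀ t ∈ ball (0 : ℂ) 2, ℓ t ∈ closedBall x R := fun t ht => by
      rw [mem_closedBall, dist_eq_norm, add_sub_cancel_left, norm_smul, ← dist_eq_norm, dist_comm]
      rw [mem_ball_zero_iff] at ht
      nlinarith [norm_nonneg t, dist_nonneg (x := x) (y := y)]
    have hdetcomp : ∀ {T : ℂ → E →L[ℂ] E} {U : Set ℂ}, DifferentiableOn ℂ T U →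
        DifferentiableOn ℂ (fun t => (T t).det) U := fun hT =>
      Differentiable.comp_differentiableOn (g := fun S : E →L[ℂ] E => S.det)
        ContinuousLinearMap.differentiable_det hT
    have hdet : (fderiv ℂ F x).det ≠ 0 := by
      have := Complex.ne_zero_of_tendsto_of_forall_ne_zero (U := ball (0 : ℂ) 2)
        (h := fun n t => (fderiv ℂ (f n) (ℓ t)).det) (H := fun t => (fderiv ℂ F (ℓ t)).det)
        isOpen_ball (convex_ball 0 2).isPreconnected
        (hAn.mono fun n hn => hdetcomp
          (((hf n).fderiv_of_isOpen (hA n)).comp hℓ.differentiableOn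
            fun t ht => hn (hℓmem t ht)))
        (hAn.mono fun n hn t ht => hdetf n _ (hn (hℓmem t ht)))
        (hdetcomp
          ((hFd.fderiv_of_isOpen hA0).comp hℓ.differentiableOn fun t ht => hball (hℓmem t ht)))
        (fun t ht => by
          have h1 := (hFlim (hball (hℓmem t ht))).2.2
          have h2 : Tendsto (fun p : ℕ × ℂ => (p.1, ℓ p.2)) (atTop ×ˢ 𝓝 t)
              (atTop ×ˢ 𝓝 (ℓ t)) :=
            tendsto_fst.prodMk (hℓ.continuous.continuousAt.tendsto.comp tendsto_snd)
          exact (ContinuousLinearMap.differentiable_det.continuous.tendsto _).comp (h1.comp h2))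
        (a := 0) (b := 1) (by simp) (by simp) (by simpa [ℓ] using hdetF hyA hFy)
      simpa [ℓ] using this
    obtain ⟨ρ, hρ, hev⟩ := exists_closedBall_subset_image_of_tendsto
      (closedBall_mem_nhds x hR) (hAn.mono fun n hn y hy =>
        (hf n).differentiableAt ((hA n).mem_nhds (hn hy)))
      (hFlim hx).2.1 (hFlim hx).2.2 hdet
    refine hlimΩ.2 (closedBall (F x) ρ) (isCompact_closedBall _ _) (eventually_atTop.1 ?_)
      (mem_closedBall_self hρ.le)
    filter_upwards [hev, hAn] with n hn hn'
    exact hn.trans (image_subset_iff.2 fun w hw => hfm n (hn' hw))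
  exact fun x hx => (hsub hx).2

end SeveralComplexVariables

theorem stmt0 (N : ℕ) (hN : 1 ≤ N)
    (A Ωs : ℕ → Set (Fin N → ℂ)) (A0 Ω0 : Set (Fin N → ℂ))
    (hAopen : ∀ i, IsOpen (A i)) (hAconn : ∀ i, IsConnected (A i))
    (hΩopen : ∀ i, IsOpen (Ωs i)) (hΩconn : ∀ i, IsConnected (Ωs i))
    (hA0open : IsOpen A0) (hA0conn : IsConnected A0)
    (hΩ0open : IsOpen Ω0) (hΩ0conn : IsConnected Ω0)
    (hlimA : DomainSeqConv A A0) (hlimΩ : DomainSeqConv Ωs Ω0)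
    (f g : ℕ → (Fin N → ℂ) → (Fin N → ℂ))
    (hfhol : ∀ i, DifferentiableOn ℂ (f i) (A i))
    (hfinj : ∀ i, Set.InjOn (f i) (A i))
    (hfim : ∀ i, f i '' A i = Ωs i)
    (hghol : ∀ i, DifferentiableOn ℂ (g i) (Ωs i))
    (hgf : ∀ i, ∀ z ∈ A i, g i (f i z) = z)
    (hfg : ∀ i, ∀ w ∈ Ωs i, f i (g i w) = w)
    (F G : (Fin N → ℂ) → (Fin N → ℂ))
    (hF : ∀ K : Set (Fin N → ℂ), K ⊆ A0 → IsCompact K →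
      TendstoUniformlyOn (fun i => f i) F atTop K)
    (hG : ∀ K : Set (Fin N → ℂ), K ⊆ Ω0 → IsCompact K →
      TendstoUniformlyOn (fun i => g i) G atTop K) :
    (∀ K : Set (Fin N → ℂ), K ⊆ A0 → IsCompact K →
      ∀ L : Set (Fin N → ℂ), L ⊆ Ω0 → IsCompact L →
        ∃ i0 : ℕ, ∀ i ≥ i0, f i '' K ∩ L = ∅) ∨
    (∃ φ : ℕ → ℕ, StrictMono φ ∧
      ∃ H Hinv : (Fin N → ℂ) → (Fin N → ℂ),
        (∀ K : Set (Fin N → ℂ), K ⊆ A0 → IsCompact K →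
          TendstoUniformlyOn (fun j => f (φ j)) H atTop K) ∧
        DifferentiableOn ℂ H A0 ∧ Set.BijOn H A0 Ω0 ∧
        DifferentiableOn ℂ Hinv Ω0 ∧
        (∀ z ∈ A0, Hinv (H z) = z) ∧ (∀ w ∈ Ω0, H (Hinv w) = w)) := by
  have : Nonempty (Fin N) := ⟨⟨0, hN⟩⟩
  rw [or_iff_not_imp_left]
  intro hdiv
  push Not at hdiv
  obtain ⟨K, hKA, hK, L, hLΩ, hL, hKL⟩ := hdiv
  choose m hm hne using hKL
  choose w hwim hwL using hne
  choose z hzK hzw using hwim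
  obtain ⟨a, haK, φ, hφ, hza⟩ := hK.tendsto_subseq hzK
  have hmφ : Tendsto (fun n => m (φ n)) atTop atTop :=
    tendsto_atTop_mono (fun n => (hφ.id_le n).trans (hm (φ n))) tendsto_id
  have haA : a ∈ A0 := hKA haK
  have hFlim := fun {x} (hx : x ∈ A0) =>
    differentiableAt_and_tendsto_prod_of_tendstoUniformlyOn_isCompact hA0open
      hlimA.eventually_subset hfhol hF hx
  have hwa : Tendsto (fun n => w (φ n)) atTop (𝓝 (F a)) :=
    ((hFlim haA).2.1.comp (hmφ.prodMk hza)).congr fun n => hzw (φ n)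
  have hFa : F a ∈ Ω0 :=
    hLΩ (hL.isClosed.mem_of_tendsto hwa (Eventually.of_forall fun n => hwL (φ n)))
  have hfm : ∀ i, MapsTo (f i) (A i) (Ωs i) := fun i x hx => hfim i ▸ mem_image_of_mem _ hx
  have hgm : ∀ i, MapsTo (g i) (Ωs i) (A i) := fun i y hy => by
    obtain ⟨x, hx, rfl⟩ := (hfim i).symm ▸ hy
    rwa [hgf i x hx]
  have hFm : MapsTo F A0 Ω0 := limit_mapsTo hAopen hΩopen hA0open hA0conn.isPreconnected hΩ0open
    hlimA hlimΩ hfhol hfm hghol hgf hF hG haA hFa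
  have hGF : ∀ x ∈ A0, G (F x) = x := fun x hx =>
    limit_leftInverse hA0open hΩ0open hlimA hlimΩ hfhol hghol hgf hF hG hx (hFm hx)
  have hGm : MapsTo G Ω0 A0 := limit_mapsTo hΩopen hAopen hΩ0open hΩ0conn.isPreconnected hA0open
    hlimΩ hlimA hghol hgm hfhol hfg hG hF hFa (by rwa [hGF a haA])
  have hFG : ∀ y ∈ Ω0, F (G y) = y := fun y hy =>
    limit_leftInverse hΩ0open hA0open hlimΩ hlimA hghol hfhol hfg hG hF hy (hGm hy)
  refine ⟨id, strictMono_id, F, G, hF, fun x hx => (hFlim hx).1.differentiableWithinAt,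
    ?_, fun y hy => ?_, hGF, hFG⟩
  · exact InvOn.bijOn ⟨hGF, hFG⟩ hFm hGm
  · exact (differentiableAt_and_tendsto_prod_of_tendstoUniformlyOn_isCompact hΩ0open
      hlimΩ.eventually_subset hghol hG hy).1.differentiableWithinAt
end

section
/- Let N ≥ 1 and let Ω be a domain in ℂ^N. Let f_j : Ω → ℂ be holomorphic maps with f_j(z) ≠ 0 for every z ∈ Ω and every j, and assume f_j converges locally uniformly on Ω to a map f. Then either f is identically zero on Ω, or f(z) ≠ 0 for every z ∈ Ω. -/
open Filter Topology Set

/-- Hurwitz's theorem in one variable: a zero of a locally uniform limit of zero-free holomorphic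
functions on a connected open set forces the limit to vanish identically. -/
theorem eqOn_zero_of_tendstoLocallyUniformlyOn_ne_zero {U : Set ℂ} (hU : IsOpen U)
    (hUc : IsPreconnected U) {f : ℕ → ℂ → ℂ} {g : ℂ → ℂ}
    (hf : ∀ j, DifferentiableOn ℂ (f j) U) (hne : ∀ j, ∀ z ∈ U, f j z ≠ 0)
    (hfg : TendstoLocallyUniformlyOn f g atTop U) {a : ℂ} (ha : a ∈ U) (hga : g a = 0) :
    EqOn g 0 U := by
  have hg : DifferentiableOn ℂ g U := hfg.differentiableOn (Eventually.of_forall hf) hU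
  have hgan : AnalyticOnNhd ℂ g U := hg.analyticOnNhd hU
  rcases (hgan a ha).eventually_eq_zero_or_eventually_ne_zero with h | h
  · exact hgan.eqOn_zero_of_preconnected_of_eventuallyEq_zero hUc ha h
  exfalso
  rw [eventually_nhdsWithin_iff] at h
  obtain ⟨r, hr, hball⟩ := Metric.nhds_basis_closedBall.eventually_iff.1
    (h.and (hU.mem_nhds ha))
  have hsub : Metric.closedBall a r ⊆ U := fun z hz => (hball hz).2
  have hsph : Metric.sphere a r ⊆ Metric.closedBall a r := Metric.sphere_subset_closedBall
  have hgs : ∀ z ∈ Metric.sphere a r, g z ≠ 0 := fun z hz =>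
    (hball (hsph hz)).1 (Metric.ne_of_mem_sphere hz hr.ne')
  obtain ⟨m, hm, hmin⟩ := (isCompact_sphere a r).exists_isMinOn
    (NormedSpace.sphere_nonempty.2 hr.le) (hg.continuousOn.mono (hsph.trans hsub)).norm
  have hδ : 0 < ‖g m‖ := norm_pos_iff.2 (hgs m hm)
  have hunif := (tendstoLocallyUniformlyOn_iff_forall_isCompact hU).1 hfg _ hsub
    (isCompact_closedBall a r)
  obtain ⟨j, hj⟩ := (Metric.tendstoUniformlyOn_iff.1 hunif (‖g m‖ / 2) (by positivity)).exists
  have hja : ‖f j a‖ < ‖g m‖ / 2 := by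
    simpa [hga] using hj a (Metric.mem_closedBall_self hr.le)
  have hjs : ∀ z ∈ frontier (Metric.ball a r), ‖(f j z)⁻¹‖ ≤ (‖g m‖ / 2)⁻¹ := by
    intro z hz
    rw [frontier_ball a hr.ne'] at hz
    rw [norm_inv]
    have h1 : ‖g m‖ ≤ ‖g z‖ := hmin hz
    have h2 := hj z (hsph hz)
    rw [dist_eq_norm] at h2
    have h3 := norm_sub_norm_le (g z) (f j z)
    exact inv_anti₀ (by positivity) (by linarith)
  have hd : DiffContOnCl ℂ (fun z => (f j z)⁻¹) (Metric.ball a r) := by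
    refine DifferentiableOn.diffContOnCl ?_
    rw [closure_ball a hr.ne']
    exact ((hf j).mono hsub).inv fun z hz => hne j z (hsub hz)
  have hmax := Complex.norm_le_of_forall_mem_frontier_norm_le Metric.isBounded_ball hd hjs
    (subset_closure (Metric.mem_ball_self hr))
  rw [norm_inv] at hmax
  have := (inv_le_inv₀ (norm_pos_iff.2 (hne j a ha)) (by positivity)).1 hmax
  linarith

/-- If a locally uniform limit of zero-free holomorphic functions on an open subset of a complex
normed space vanishes at `a`, then it vanishes on every ball around `a` inside that set. -/
theorem eqOn_zero_ball_of_tendstoLocallyUniformlyOn_ne_zero {E : Type*} [NormedAddCommGroup E]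
    [NormedSpace ℂ E] {U : Set E} {f : ℕ → E → ℂ} {F : E → ℂ}
    (hf : ∀ j, DifferentiableOn ℂ (f j) U) (hne : ∀ j, ∀ z ∈ U, f j z ≠ 0)
    (hfF : TendstoLocallyUniformlyOn f F atTop U) {a : E} {r : ℝ}
    (hr : Metric.ball a r ⊆ U) (ha : F a = 0) :
    EqOn F 0 (Metric.ball a r) := by
  intro w hw
  let L : ℂ → E := fun t => a + t • (w - a)
  have hL : Differentiable ℂ L := by fun_prop
  have hLV : MapsTo L (L ⁻¹' Metric.ball a r) U := fun t ht => hr ht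
  have hVc : IsPreconnected (L ⁻¹' Metric.ball a r) :=
    (((convex_ball a r).translate_preimage_right a).linear_preimage
      ((LinearMap.toSpanSingleton ℂ E (w - a)).restrictScalars ℝ)).isPreconnected
  have h0 : (0 : ℂ) ∈ L ⁻¹' Metric.ball a r := by
    simpa [L] using dist_nonneg.trans_lt (Metric.mem_ball.1 hw)
  have h1 : (1 : ℂ) ∈ L ⁻¹' Metric.ball a r := by simpa [L] using hw
  have key := eqOn_zero_of_tendstoLocallyUniformlyOn_ne_zero
    (Metric.isOpen_ball.preimage hL.continuous) hVc
    (fun j => (hf j).comp hL.differentiableOn hLV) (fun j t ht => hne j _ (hLV ht))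
    (hfF.comp L hLV hL.continuous.continuousOn) h0 (by simpa [L] using ha) h1
  simpa [L] using key

theorem stmt1 (N : ℕ) (hN : 1 ≤ N)
    (Ω : Set (Fin N → ℂ)) (hΩopen : IsOpen Ω) (hΩconn : IsConnected Ω)
    (f : ℕ → (Fin N → ℂ) → ℂ)
    (hfhol : ∀ j, DifferentiableOn ℂ (f j) Ω)
    (hfne : ∀ j, ∀ z ∈ Ω, f j z ≠ 0)
    (F : (Fin N → ℂ) → ℂ)
    (hF : ∀ K : Set (Fin N → ℂ), K ⊆ Ω → IsCompact K →
      TendstoUniformlyOn (fun j => f j) F atTop K) :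
    (∀ z ∈ Ω, F z = 0) ∨ (∀ z ∈ Ω, F z ≠ 0) := by
  have hloc : TendstoLocallyUniformlyOn f F atTop Ω :=
    (tendstoLocallyUniformlyOn_iff_forall_isCompact hΩopen).2 hF
  have hcont : ContinuousOn F Ω :=
    hloc.continuousOn (Frequently.of_forall fun j => (hfhol j).continuousOn)
  have hzero : IsOpen (Ω ∩ F ⁻¹' {0}) := by
    refine Metric.isOpen_iff.2 fun a ha => ?_
    obtain ⟨r, hr, hball⟩ := Metric.isOpen_iff.1 hΩopen a ha.1
    exact ⟨r, hr, fun z hz => ⟨hball hz,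
      eqOn_zero_ball_of_tendstoLocallyUniformlyOn_ne_zero hfhol hfne hloc hball ha.2 hz⟩⟩
  have hnonzero : IsOpen (Ω ∩ F ⁻¹' {0}ᶜ) :=
    hcont.isOpen_inter_preimage hΩopen isOpen_compl_singleton
  refine (hΩconn.isPreconnected.subset_or_subset hzero hnonzero ?_ ?_).imp
    (fun h z hz => (h hz).2) (fun h z hz => (h hz).2)
  · exact Set.disjoint_left.2 fun z hz hz' => hz'.2 hz.2
  · exact fun z hz => (em (F z = 0)).imp (fun h => ⟨hz, h⟩) (fun h => ⟨hz, h⟩)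
end

section
/- Let N ≥ 1, let U be an open subset of ℂ^N, and let F : U → ℂ^N be a holomorphic map with det F'(z) = 0 for every z ∈ U. Then the image F(U) has empty interior in ℂ^N. -/
open Filter Topology Set

/-- The real determinant of a complex-linear endomorphism with zero complex determinant is zero. -/
theorem det_restrictScalars_real_eq_zero {E : Type*} [NormedAddCommGroup E] [NormedSpace ℂ E]
    {A : E →L[ℂ] E} (hA : A.det = 0) : (A.restrictScalars ℝ).det = 0 := by
  have h : LinearMap.det (A : E →ₗ[ℂ] E) = 0 := hA
  change LinearMap.det ((A : E →ₗ[ℂ] E).restrictScalars ℝ) = 0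
  rw [LinearMap.det_restrictScalars, h, Algebra.norm_zero]

theorem stmt3 (N : ℕ) (hN : 1 ≤ N)
    (U : Set (Fin N → ℂ)) (hU : IsOpen U)
    (F : (Fin N → ℂ) → (Fin N → ℂ))
    (hFhol : DifferentiableOn ℂ F U)
    (hdet : ∀ z ∈ U, (fderiv ℂ F z).det = 0) :
    interior (F '' U) = ∅ := by
  have hnull : MeasureTheory.volume (F '' U) = 0 :=
    MeasureTheory.addHaar_image_eq_zero_of_det_fderivWithin_eq_zero _
      (fun z hz => ((hFhol.differentiableAt
        (hU.mem_nhds hz)).hasFDerivAt.restrictScalars ℝ).hasFDerivWithinAt)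
      (fun z hz => det_restrictScalars_real_eq_zero (hdet z hz))
  exact MeasureTheory.Measure.interior_eq_empty_of_null hnull
end

section
/- Let N ≥ 1 and let Ω be a domain in ℂ^N. Let F_j : Ω → ℂ^N be holomorphic maps with det F_j'(z) ≠ 0 for every z ∈ Ω and every j, and assume F_j converges locally uniformly on Ω to a map F whose image F(Ω) has nonempty interior in ℂ^N. Then det F'(z) ≠ 0 for every z ∈ Ω, and consequently F(Ω) is an open subset of ℂ^N. -/
open Filter Topology Set

open Metric in
/-- Cauchy estimate for the Fréchet derivative. -/
theorem norm_fderiv_le_of_forall_mem_ball_norm_le {E G : Type*} [NormedAddCommGroup E]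
    [NormedSpace ℂ E] [NormedAddCommGroup G] [NormedSpace ℂ G] {f : E → G} {c : E} {r M : ℝ}
    (hr : 0 < r) (hf : DifferentiableOn ℂ f (ball c r)) (hM : ∀ z ∈ ball c r, ‖f z‖ ≤ M) :
    ‖fderiv ℂ f c‖ ≤ 2 * M / r := by
  refine Complex.norm_fderiv_le_div_of_mapsTo_ball hf (fun z hz => ?_) hr
  rw [mem_closedBall, dist_eq_norm]
  linarith [norm_sub_le (f z) (f c), hM z hz, hM c (mem_ball_self hr)]

open Metric in
theorem uniformCauchySeqOn_fderiv_ball {E G : Type*} [NormedAddCommGroup E]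
    [NormedSpace ℂ E] [NormedAddCommGroup G] [NormedSpace ℂ G] {f : ℕ → E → G} {c : E} {r : ℝ}
    (hr : 0 < r) (hd : ∀ᶠ n in atTop, DifferentiableOn ℂ (f n) (ball c (2 * r)))
    (hf : UniformCauchySeqOn f atTop (ball c (2 * r))) :
    UniformCauchySeqOn (fun n => fderiv ℂ (f n)) atTop (ball c r) := by
  rw [Metric.uniformCauchySeqOn_iff] at hf ⊢
  intro ε hε
  obtain ⟨N, hN⟩ := hf (ε * r / 4) (by positivity)
  obtain ⟨N', hN'⟩ := eventually_atTop.1 hd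
  refine ⟨max N N', fun m hm n hn z hz => ?_⟩
  have hsub : ball z r ⊆ ball c (2 * r) :=
    ball_subset_ball' (by rw [mem_ball] at hz; linarith)
  have hzc : z ∈ ball c (2 * r) := hsub (mem_ball_self hr)
  have hdm := hN' m (le_of_max_le_right hm)
  have hdn := hN' n (le_of_max_le_right hn)
  have key := norm_fderiv_le_of_forall_mem_ball_norm_le (f := f m - f n) (M := ε * r / 4) hr
    ((hdm.sub hdn).mono hsub) (fun w hw => by
      rw [Pi.sub_apply, ← dist_eq_norm]
      exact (hN m (le_of_max_le_left hm) n (le_of_max_le_left hn) w (hsub hw)).le)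
  rw [fderiv_sub (hdm.differentiableAt (isOpen_ball.mem_nhds hzc))
    (hdn.differentiableAt (isOpen_ball.mem_nhds hzc)), ← dist_eq_norm] at key
  refine key.trans_lt ?_
  rw [div_lt_iff₀ hr]
  nlinarith [mul_pos hε hr]

open Metric in
/-- Weierstrass' theorem in several variables: a locally uniform limit of holomorphic maps is
holomorphic and the derivatives converge locally uniformly. -/
theorem TendstoLocallyUniformlyOn.differentiableOn_and_fderiv {E G : Type*} [NormedAddCommGroup E]
    [NormedSpace ℂ E] [ProperSpace E] [NormedAddCommGroup G] [NormedSpace ℂ G] [CompleteSpace G]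
    {f : ℕ → E → G} {g : E → G} {U : Set E} (hU : IsOpen U)
    (hd : ∀ᶠ n in atTop, DifferentiableOn ℂ (f n) U)
    (hf : TendstoLocallyUniformlyOn f g atTop U) :
    DifferentiableOn ℂ g U ∧
      TendstoLocallyUniformlyOn (fun n => fderiv ℂ (f n)) (fderiv ℂ g) atTop U := by
  have key : ∀ x ∈ U, ∃ r > 0, (∀ z ∈ ball x r, DifferentiableAt ℂ g z) ∧
      TendstoUniformlyOn (fun n => fderiv ℂ (f n)) (fderiv ℂ g) atTop (ball x r) := by
    intro x hx
    obtain ⟨s, hs, hsU⟩ := nhds_basis_closedBall.mem_iff.1 (hU.mem_nhds hx)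
    have hr : 0 < s / 2 := by positivity
    have hunif : TendstoUniformlyOn f g atTop (ball x (2 * (s / 2))) := by
      rw [mul_div_cancel₀ s two_ne_zero]
      exact ((tendstoLocallyUniformlyOn_iff_forall_isCompact hU).1 hf _ hsU
        (isCompact_closedBall x s)).mono ball_subset_closedBall
    have hsub : ball x (2 * (s / 2)) ⊆ U := by
      rw [mul_div_cancel₀ s two_ne_zero]
      exact ball_subset_closedBall.trans hsU
    have hcauchy := uniformCauchySeqOn_fderiv_ball hr (hd.mono fun n hn => hn.mono hsub)
      hunif.uniformCauchySeqOn
    have hex : ∀ z, ∃ L, z ∈ ball x (s / 2) →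
        Tendsto (fun n => fderiv ℂ (f n) z) atTop (𝓝 L) := by
      intro z
      by_cases hz : z ∈ ball x (s / 2)
      · obtain ⟨L, hL⟩ := cauchySeq_tendsto_of_complete (hcauchy.cauchySeq hz)
        exact ⟨L, fun _ => hL⟩
      · exact ⟨0, fun h => absurd h hz⟩
    choose L hL using hex
    have hlim := hcauchy.tendstoUniformlyOn_of_tendsto hL
    have hder : ∀ z ∈ ball x (s / 2), HasFDerivAt g (L z) z := by
      intro z hz
      have hzn : ball x (s / 2) ∈ 𝓝 z := isOpen_ball.mem_nhds hz
      have hsub' : ball x (s / 2) ⊆ ball x (2 * (s / 2)) := ball_subset_ball (by linarith)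
      refine hasFDerivAt_of_tendstoUniformlyOnFilter (l := atTop) (f := f)
        (f' := fun n => fderiv ℂ (f n)) ?_ ?_ ?_
      · exact (tendstoUniformlyOn_iff_tendstoUniformlyOnFilter.1 hlim).mono_right
          (le_principal_iff.2 hzn)
      · filter_upwards [prod_mem_prod hd hzn] with p hp
        exact (hp.1.differentiableAt (hU.mem_nhds (hsub (hsub' hp.2)))).hasFDerivAt
      · filter_upwards [hzn] with y hy using hunif.tendsto_at (hsub' hy)
    exact ⟨s / 2, hr, fun z hz => (hder z hz).differentiableAt,
      hlim.congr_right fun z hz => (hder z hz).fderiv.symm⟩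
  constructor
  · intro x hx
    obtain ⟨r, hr, h, -⟩ := key x hx
    exact (h x (mem_ball_self hr)).differentiableWithinAt
  · intro u hu x hx
    obtain ⟨r, hr, -, h⟩ := key x hx
    exact ⟨_, mem_nhdsWithin_of_mem_nhds (ball_mem_nhds x hr), h u hu⟩

open Metric in
/-- Uniform second-order Taylor estimate for a holomorphic map near a point. -/
theorem DifferentiableOn.exists_norm_sub_fderiv_le {E G : Type*} [NormedAddCommGroup E]
    [NormedSpace ℂ E] [NormedAddCommGroup G] [NormedSpace ℂ G] {f : E → G} {U : Set E}
    (hU : IsOpen U) (hf : DifferentiableOn ℂ f U) {c : E} (hc : c ∈ U) :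
    ∃ r > 0, ball c (2 * r) ⊆ U ∧ ∀ z ∈ ball c r, ∀ w ∈ ball z r,
      ‖f w - f z - fderiv ℂ f z (w - z)‖ ≤ 4 * (‖w - z‖ / r) ^ 2 := by
  have hcont : ContinuousAt f c := (hf.differentiableAt (hU.mem_nhds hc)).continuousAt
  obtain ⟨s, hs, hsU⟩ := Metric.mem_nhds_iff.1
    (inter_mem (hU.mem_nhds hc) (hcont (ball_mem_nhds (f c) one_pos)))
  have hs2 : 2 * (s / 2) = s := by ring
  refine ⟨s / 2, by positivity, by rw [hs2]; exact fun z hz => (hsU hz).1, fun z hz w hw => ?_⟩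
  set r := s / 2
  have hr : 0 < r := by positivity
  have hsub : ball z r ⊆ ball c s := ball_subset_ball' (by rw [mem_ball] at hz; linarith)
  have hzU : z ∈ U := (hsU (hsub (mem_ball_self hr))).1
  have hdz : DifferentiableAt ℂ f z := hf.differentiableAt (hU.mem_nhds hzU)
  have hdr : DifferentiableOn ℂ f (ball z r) := hf.mono fun y hy => (hsU (hsub hy)).1
  have hmaps : MapsTo f (ball z r) (closedBall (f z) 2) := by
    intro y hy
    have h1 := mem_ball.1 (hsU (hsub hy)).2
    have h2 := mem_ball.1 (hsU (hsub (mem_ball_self hr))).2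
    rw [mem_closedBall]
    linarith [dist_triangle_right (f y) (f z) (f c)]
  have hder := Complex.norm_fderiv_le_div_of_mapsTo_ball hdr hmaps hr
  let φ : E → G := fun y => f y - fderiv ℂ f z (y - z)
  have hφ : ∀ y, φ y - φ z = f y - f z - fderiv ℂ f z (y - z) := by
    intro y; simp only [φ, sub_self, map_zero]; abel
  have hφd : DifferentiableOn ℂ φ (ball z r) :=
    hdr.sub ((fderiv ℂ f z).differentiable.comp (differentiable_id.sub_const z)).differentiableOn
  have hφm : MapsTo φ (ball z r) (closedBall (φ z) 4) := by
    intro y hy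
    have h1 := hmaps hy
    rw [mem_closedBall, dist_eq_norm] at h1 ⊢
    rw [hφ]
    have h2 : ‖fderiv ℂ f z (y - z)‖ ≤ 2 := by
      refine ((fderiv ℂ f z).le_opNorm _).trans ?_
      have h3 : ‖y - z‖ ≤ r := by rw [← dist_eq_norm]; exact (mem_ball.1 hy).le
      calc ‖fderiv ℂ f z‖ * ‖y - z‖ ≤ 2 / r * r := by gcongr
        _ = 2 := by field_simp
    linarith [norm_sub_le (f y - f z) (fderiv ℂ f z (y - z))]
  have hφo : Asymptotics.IsLittleO (𝓝 z) (φ · - φ z) (fun y => ‖y - z‖ ^ 1) := by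
    simp only [hφ, pow_one]
    exact (hasFDerivAt_iff_isLittleO.1 hdz.hasFDerivAt).norm_right
  have := Complex.dist_le_mul_div_pow_of_mapsTo_ball_of_isLittleO hφd hφm hφo hw
  rwa [dist_eq_norm, hφ, dist_eq_norm] at this

open Metric in
/-- Directional derivatives of a holomorphic map are holomorphic. -/
theorem DifferentiableOn.fderiv_apply_const {E G : Type*} [NormedAddCommGroup E]
    [NormedSpace ℂ E] [ProperSpace E] [NormedAddCommGroup G] [NormedSpace ℂ G] [CompleteSpace G]
    {f : E → G} {U : Set E} (hU : IsOpen U) (hf : DifferentiableOn ℂ f U) (v : E) :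
    DifferentiableOn ℂ (fun z => fderiv ℂ f z v) U := by
  intro c hc
  obtain ⟨r, hr, hrU, hT⟩ := hf.exists_norm_sub_fderiv_le hU hc
  let q : ℕ → E → G := fun n z =>
    ((n : ℂ) + 1) • (f (z + ((n : ℂ) + 1)⁻¹ • v) - f z)
  have hn0 : ∀ n : ℕ, (n : ℂ) + 1 ≠ 0 := fun n => Nat.cast_add_one_ne_zero n
  have hnn : ∀ n : ℕ, ‖(n : ℂ) + 1‖ = n + 1 := fun n => by
    rw [← Nat.cast_add_one, Complex.norm_natCast, Nat.cast_add_one]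
  have hlim (C : ℝ) : Tendsto (fun n : ℕ => C / ((n : ℝ) + 1)) atTop (𝓝 0) :=
    tendsto_const_nhds.div_atTop
      (tendsto_atTop_add_const_right _ _ tendsto_natCast_atTop_atTop)
  have hnv : ∀ n : ℕ, ‖((n : ℂ) + 1)⁻¹ • v‖ = ‖v‖ / (n + 1) := fun n => by
    rw [norm_smul, norm_inv, hnn]; ring
  have hsmall : ∀ᶠ n : ℕ in atTop, ‖((n : ℂ) + 1)⁻¹ • v‖ < r := by
    simp only [hnv]
    exact (hlim ‖v‖).eventually_lt_const hr
  have hball : ball c r ⊆ U := (ball_subset_ball (by linarith)).trans hrU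
  have hq : ∀ᶠ n in atTop, DifferentiableOn ℂ (q n) (ball c r) := by
    filter_upwards [hsmall] with n hn
    refine DifferentiableOn.const_smul (DifferentiableOn.sub ?_ (hf.mono hball)) _
    refine hf.comp (differentiable_id.add_const _).differentiableOn fun z hz => hrU ?_
    rw [mem_ball, dist_eq_norm] at hz ⊢
    calc ‖id z + ((n : ℂ) + 1)⁻¹ • v - c‖ = ‖(z - c) + ((n : ℂ) + 1)⁻¹ • v‖ := by
          congr 1; simp only [id]; abel
      _ < 2 * r := by linarith [norm_add_le (z - c) (((n : ℂ) + 1)⁻¹ • v)]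
  have hconv : TendstoUniformlyOn q (fun z => fderiv ℂ f z v) atTop (ball c r) := by
    rw [Metric.tendstoUniformlyOn_iff]
    intro ε hε
    filter_upwards [hsmall, (hlim (4 * (‖v‖ / r) ^ 2)).eventually_lt_const hε] with n hn hnε z hz
    have hw : z + ((n : ℂ) + 1)⁻¹ • v ∈ ball z r := by simpa [dist_eq_norm] using hn
    have hTz := hT z hz _ hw
    rw [add_sub_cancel_left, hnv] at hTz
    have hpos : (0 : ℝ) < n + 1 := by positivity
    have heq : q n z - fderiv ℂ f z v = ((n : ℂ) + 1) •
        (f (z + ((n : ℂ) + 1)⁻¹ • v) - f z - fderiv ℂ f z (((n : ℂ) + 1)⁻¹ • v)) := by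
      simp only [q, map_smul, smul_sub]
      rw [smul_smul, mul_inv_cancel₀ (hn0 n), one_smul]
    rw [dist_comm, dist_eq_norm, heq, norm_smul, hnn]
    refine lt_of_le_of_lt ?_ hnε
    calc ((n : ℝ) + 1) * _ ≤ (n + 1) * (4 * (‖v‖ / (n + 1) / r) ^ 2) := by gcongr
      _ = 4 * (‖v‖ / r) ^ 2 / (n + 1) := by field_simp
  have := (hconv.tendstoLocallyUniformlyOn.differentiableOn_and_fderiv isOpen_ball hq).1
  exact (this.differentiableAt (ball_mem_nhds c hr)).differentiableWithinAt

theorem DifferentiableOn.det_fderiv {N : ℕ} {f : (Fin N → ℂ) → (Fin N → ℂ)}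
    {U : Set (Fin N → ℂ)} (hU : IsOpen U) (hf : DifferentiableOn ℂ f U) :
    DifferentiableOn ℂ (fun z => (fderiv ℂ f z).det) U := by
  have hdet : ∀ z, (fderiv ℂ f z).det =
      ∑ σ : Equiv.Perm (Fin N), ((Equiv.Perm.sign σ : ℤ) : ℂ) *
        ∏ i, fderiv ℂ f z (Pi.single i 1) (σ i) := by
    intro z
    rw [ContinuousLinearMap.det, ← LinearMap.det_toMatrix', Matrix.det_apply']
    simp [LinearMap.toMatrix'_apply]
  simp only [hdet]
  refine DifferentiableOn.fun_sum fun σ _ => DifferentiableOn.const_mul ?_ _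
  intro z hz
  have hentry (i : Fin N) :
      DifferentiableWithinAt ℂ (fun z => fderiv ℂ f z (Pi.single i 1) (σ i)) U z :=
    differentiableOn_pi.1 (hf.fderiv_apply_const hU (Pi.single i 1)) (σ i) z hz
  exact (HasFDerivWithinAt.finsetProd (u := Finset.univ)
    fun i _ => (hentry i).hasFDerivWithinAt).differentiableWithinAt

theorem DifferentiableOn.continuousOn_fderiv_complex {E G : Type*} [NormedAddCommGroup E]
    [NormedSpace ℂ E] [FiniteDimensional ℂ E] [NormedAddCommGroup G] [NormedSpace ℂ G]
    [CompleteSpace G] {f : E → G} {U : Set E} (hU : IsOpen U) (hf : DifferentiableOn ℂ f U) :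
    ContinuousOn (fderiv ℂ f) U := by
  have := FiniteDimensional.proper ℂ E
  exact continuousOn_clm_apply.2 fun v => (hf.fderiv_apply_const hU v).continuousOn

/-- Locally uniform convergence to a continuous limit is preserved by continuous maps. -/
theorem Continuous.comp_tendstoLocallyUniformlyOn {X Y Z ι : Type*} [TopologicalSpace X]
    [PseudoMetricSpace Y] [PseudoMetricSpace Z] {l : Filter ι} {f : ι → X → Y} {g : X → Y}
    {s : Set X} {φ : Y → Z} (hφ : Continuous φ) (hg : ContinuousOn g s)
    (hf : TendstoLocallyUniformlyOn f g l s) :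
    TendstoLocallyUniformlyOn (fun n x => φ (f n x)) (fun x => φ (g x)) l s := by
  rw [Metric.tendstoLocallyUniformlyOn_iff] at hf ⊢
  intro ε hε x hx
  obtain ⟨δ, hδ, hφδ⟩ := Metric.continuousAt_iff.1 (hφ.continuousAt (x := g x)) (ε / 2)
    (by positivity)
  obtain ⟨t, ht, htf⟩ := hf (δ / 2) (by positivity) x hx
  refine ⟨t ∩ {y | dist (g y) (g x) < δ / 2},
    inter_mem ht (hg x hx (Metric.ball_mem_nhds _ (by positivity))), ?_⟩
  filter_upwards [htf] with n hn y hy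
  have h1 := hn y hy.1
  have h2 : dist (g y) (g x) < δ / 2 := hy.2
  have h3 := hφδ (x := g y) (by linarith)
  have h4 := hφδ (x := f n y) (by linarith [dist_triangle_left (f n y) (g x) (g y)])
  linarith [dist_triangle_right (φ (g y)) (φ (f n y)) (φ (g x))]

open Metric in
/-- Hurwitz' theorem on a planar domain. -/
theorem TendstoLocallyUniformlyOn.eqOn_zero_of_ne_zero {h : ℕ → ℂ → ℂ} {g : ℂ → ℂ} {U : Set ℂ}
    (hU : IsOpen U) (hUc : IsPreconnected U) (hd : ∀ n, DifferentiableOn ℂ (h n) U)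
    (hne : ∀ n, ∀ z ∈ U, h n z ≠ 0) (hlim : TendstoLocallyUniformlyOn h g atTop U) {c : ℂ}
    (hc : c ∈ U) (hgc : g c = 0) : EqOn g 0 U := by
  have hg : DifferentiableOn ℂ g U := hlim.differentiableOn (Eventually.of_forall hd) hU
  have hga : AnalyticOnNhd ℂ g U := hg.analyticOnNhd hU
  rcases (hga c hc).eventually_eq_zero_or_eventually_ne_zero with h0 | h0
  · exact hga.eqOn_zero_of_preconnected_of_eventuallyEq_zero hUc hc h0
  exfalso
  rw [eventually_nhdsWithin_iff] at h0
  obtain ⟨r, hr, hrU⟩ := nhds_basis_closedBall.mem_iff.1 (inter_mem (hU.mem_nhds hc) h0)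
  have hcU : closedBall c r ⊆ U := fun z hz => (hrU hz).1
  have hsph : ∀ z ∈ sphere c r, g z ≠ 0 := fun z hz =>
    (hrU (sphere_subset_closedBall hz)).2 (ne_of_mem_sphere hz hr.ne')
  obtain ⟨w, hw, hwmin⟩ := (isCompact_sphere c r).exists_isMinOn
    (NormedSpace.sphere_nonempty.2 hr.le)
    ((hg.continuousOn.mono (sphere_subset_closedBall.trans hcU)).norm)
  have hε : 0 < ‖g w‖ := norm_pos_iff.2 (hsph w hw)
  have hunif := Metric.tendstoUniformlyOn_iff.1
    ((tendstoLocallyUniformlyOn_iff_forall_isCompact hU).1 hlim _ hcU (isCompact_closedBall c r))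
    (‖g w‖ / 2) (by positivity)
  obtain ⟨n, hn⟩ := hunif.exists
  have hlow : ∀ z ∈ sphere c r, ‖(h n z)⁻¹‖ ≤ (‖g w‖ / 2)⁻¹ := by
    intro z hz
    have h1 := hn z (sphere_subset_closedBall hz)
    have h2 : ‖g w‖ ≤ ‖g z‖ := hwmin hz
    rw [dist_eq_norm] at h1
    rw [norm_inv]
    exact inv_anti₀ (by positivity) (by linarith [norm_sub_norm_le (g z) (h n z)])
  have hdc : DiffContOnCl ℂ (fun z => (h n z)⁻¹) (ball c r) := by
    refine DifferentiableOn.diffContOnCl ?_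
    rw [closure_ball c hr.ne']
    exact ((hd n).mono hcU).inv fun z hz => hne n z (hcU hz)
  have h3 := Complex.norm_le_of_forall_mem_frontier_norm_le isBounded_ball hdc
    (by rwa [frontier_ball c hr.ne']) (subset_closure (mem_ball_self hr))
  have h4 := hn c (mem_closedBall_self hr.le)
  rw [hgc, dist_zero_left] at h4
  rw [norm_inv, inv_le_inv₀ (norm_pos_iff.2 (hne n c hc)) (by positivity)] at h3
  linarith

open Metric in
/-- Hurwitz' theorem on a ball of a complex normed space. -/
theorem TendstoLocallyUniformlyOn.eqOn_zero_ball_of_ne_zero {E : Type*} [NormedAddCommGroup E]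
    [NormedSpace ℂ E] {h : ℕ → E → ℂ} {g : E → ℂ} {c : E} {r : ℝ}
    (hd : ∀ n, DifferentiableOn ℂ (h n) (ball c r)) (hne : ∀ n, ∀ z ∈ ball c r, h n z ≠ 0)
    (hlim : TendstoLocallyUniformlyOn h g atTop (ball c r)) (hgc : g c = 0) :
    EqOn g 0 (ball c r) := by
  intro z hz
  let ℓ : ℂ → E := fun t => c + t • (z - c)
  have hℓd : Differentiable ℂ ℓ := (differentiable_id.smul_const (z - c)).const_add c
  have hℓ0 : ℓ 0 = c := by simp [ℓ]
  have hℓ1 : ℓ 1 = z := by simp [ℓ]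
  have hr : 0 < r := dist_nonneg.trans_lt (mem_ball.1 hz)
  have hconv : IsPreconnected (ℓ ⁻¹' ball c r) := by
    have : ℓ ⁻¹' ball c r =
        (LinearMap.toSpanSingleton ℂ E (z - c)).restrictScalars ℝ ⁻¹' ball 0 r := by
      ext t; simp [ℓ]
    rw [this]
    exact ((convex_ball 0 r).linear_preimage _).isPreconnected
  have key := TendstoLocallyUniformlyOn.eqOn_zero_of_ne_zero (h := fun n => h n ∘ ℓ) (g := g ∘ ℓ)
    (isOpen_ball.preimage hℓd.continuous) hconv
    (fun n => (hd n).comp hℓd.differentiableOn (mapsTo_preimage _ _))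
    (fun n t ht => hne n _ ht)
    (hlim.comp ℓ (mapsTo_preimage _ _) hℓd.continuous.continuousOn) (c := 0)
    (by simpa [hℓ0] using hr) (by simp [hℓ0, hgc])
  simpa [hℓ1] using key (show (1 : ℂ) ∈ ℓ ⁻¹' ball c r by simpa [hℓ1] using hz)

open MeasureTheory in
/-- Sard's lemma for holomorphic maps with identically vanishing Jacobian. -/
theorem interior_image_eq_empty_of_det_fderiv_eq_zero {N : ℕ} {F : (Fin N → ℂ) → (Fin N → ℂ)}
    {U : Set (Fin N → ℂ)} (hd : ∀ z ∈ U, DifferentiableAt ℂ F z)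
    (hdet : ∀ z ∈ U, (fderiv ℂ F z).det = 0) : interior (F '' U) = ∅ := by
  have hzero : volume (F '' U) = 0 := by
    refine addHaar_image_eq_zero_of_det_fderivWithin_eq_zero volume
      (f' := fun z => (fderiv ℂ F z).restrictScalars ℝ)
      (fun z hz => ((hd z hz).hasFDerivAt.restrictScalars ℝ).hasFDerivWithinAt) fun z hz => ?_
    have := LinearMap.det_restrictScalars (R := ℝ) (f := (fderiv ℂ F z : (Fin N → ℂ) →ₗ[ℂ] _))
    have h0 : LinearMap.det (fderiv ℂ F z : (Fin N → ℂ) →ₗ[ℂ] (Fin N → ℂ)) = 0 := hdet z hz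
    rw [h0, Algebra.norm_zero] at this
    exact this
  exact Measure.interior_eq_empty_of_null hzero

theorem stmt4 (N : ℕ) (hN : 1 ≤ N)
    (Ω : Set (Fin N → ℂ)) (hΩopen : IsOpen Ω) (hΩconn : IsConnected Ω)
    (f : ℕ → (Fin N → ℂ) → (Fin N → ℂ))
    (hfhol : ∀ j, DifferentiableOn ℂ (f j) Ω)
    (hfdet : ∀ j, ∀ z ∈ Ω, (fderiv ℂ (f j) z).det ≠ 0)
    (F : (Fin N → ℂ) → (Fin N → ℂ))
    (hF : ∀ K : Set (Fin N → ℂ), K ⊆ Ω → IsCompact K →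
      TendstoUniformlyOn (fun j => f j) F atTop K)
    (hint : (interior (F '' Ω)).Nonempty) :
    (∀ z ∈ Ω, (fderiv ℂ F z).det ≠ 0) ∧ IsOpen (F '' Ω) := by
  obtain ⟨hFd, hFder⟩ := TendstoLocallyUniformlyOn.differentiableOn_and_fderiv hΩopen
    (Eventually.of_forall hfhol) ((tendstoLocallyUniformlyOn_iff_forall_isCompact hΩopen).2 hF)
  have hFat : ∀ z ∈ Ω, DifferentiableAt ℂ F z := fun z hz =>
    hFd.differentiableAt (hΩopen.mem_nhds hz)
  have hcont := hFd.continuousOn_fderiv_complex hΩopen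
  have hdetlim := ContinuousLinearMap.continuous_det.comp_tendstoLocallyUniformlyOn hcont hFder
  have hdet : ∀ z ∈ Ω, (fderiv ℂ F z).det ≠ 0 := by
    by_contra! hex
    obtain ⟨a, ha, ha0⟩ := hex
    have hall : ∀ z ∈ Ω, (fderiv ℂ F z).det = 0 := by
      by_contra! hex
      obtain ⟨b, hb, hb0⟩ := hex
      have hopen₁ : IsOpen {z ∈ Ω | (fderiv ℂ F z).det = 0} := by
        rw [Metric.isOpen_iff]
        rintro z ⟨hz, hz0⟩
        obtain ⟨r, hr, hrΩ⟩ := Metric.isOpen_iff.1 hΩopen z hz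
        have h0 := TendstoLocallyUniformlyOn.eqOn_zero_ball_of_ne_zero
          (fun n => ((hfhol n).det_fderiv hΩopen).mono hrΩ)
          (fun n w hw => hfdet n w (hrΩ hw)) (hdetlim.mono hrΩ) hz0
        exact ⟨r, hr, fun w hw => ⟨hrΩ hw, h0 hw⟩⟩
      have hopen₂ : IsOpen (Ω ∩ (fun z => (fderiv ℂ F z).det) ⁻¹' {0}ᶜ) :=
        (hFd.det_fderiv hΩopen).continuousOn.isOpen_inter_preimage hΩopen
          isOpen_compl_singleton
      obtain ⟨z, -, hz₁, hz₂⟩ := hΩconn.isPreconnected _ _ hopen₁ hopen₂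
        (fun z hz => (em _).imp (fun h => ⟨hz, h⟩) (fun h => ⟨hz, h⟩))
        ⟨a, ha, ha, ha0⟩ ⟨b, hb, hb, hb0⟩
      exact hz₂.2 hz₁.2
    exact hint.ne_empty (interior_image_eq_empty_of_det_fderiv_eq_zero hFat hall)
  refine ⟨hdet, isOpen_iff_mem_nhds.2 ?_⟩
  rintro _ ⟨z, hz, rfl⟩
  have hstrict : HasStrictFDerivAt F (fderiv ℂ F z) z :=
    hasStrictFDerivAt_of_hasFDerivAt_of_continuousAt
      ((hΩopen.eventually_mem hz).mono fun y hy => (hFat y hy).hasFDerivAt)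
      (hcont.continuousAt (hΩopen.mem_nhds hz))
  rw [← ContinuousLinearMap.coe_toContinuousLinearEquivOfDetNeZero _ (hdet z hz)] at hstrict
  rw [← hstrict.map_nhds_eq_of_equiv]
  exact image_mem_map (hΩopen.mem_nhds hz)
end
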